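/- arXiv:2011.13235 — 2 statements merged into one kernel-verified Lean document; each statement's English description precedes it below -/
import Mathlib

section
/- Let ũ : ℝ×ℝ → ℝ be three times continuously differentiable, and define u(x,t) = ũ(x−t, t) + 1. Set m = u − u_{xx}, m̃ = ũ − ũ_{xx} + 1 and ω̃ = ũ² − ũ_x² + 2ũ. Then the modified Camassa–Holm equation m_t + ((u² − u_x²) m)_x = 0 holds at a point (x,t) if and only if the equation m̃_t + (ω̃ m̃)_x = 0 holds at the point (x−t, t). -/
/-- Partial derivative in the first (spatial) variable of a curried function. -/
noncomputable def pdx (f : ℝ → ℝ → ℝ) : ℝ → ℝ → ℝ := fun x t => deriv (fun x' => f x' t) x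

/-- Partial derivative in the second (time) variable of a curried function. -/
noncomputable def pdt (f : ℝ → ℝ → ℝ) : ℝ → ℝ → ℝ := fun x t => deriv (fun t' => f x t') t

/-!
A density `q` and a flux `φ` with `q_t + φ_x = 0` become, in a frame moving with speed `c`, the
density `q` and the flux `φ + c q`: the chain rule turns `q_t` into `q_t - c q_x`, and the extra
flux restores `c q_x`. On the background `κ` one has `u² - u_x² = ω̃ + κ²`, so the flux of the
modified Camassa–Holm equation is `ω̃ m̃ + κ² m̃`, and passing to the frame of speed `κ²` removes
exactly the second term.
-/

open Function

variable {f q φ : ℝ → ℝ → ℝ} {c x t : ℝ}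

theorem pdx_eq_fderiv (hf : DifferentiableAt ℝ (uncurry f) (x, t)) :
    pdx f x t = fderiv ℝ (uncurry f) (x, t) (1, 0) :=
  (hf.hasFDerivAt.comp_hasDerivAt (f := fun x' => (x', t)) x
    ((hasDerivAt_id x).prodMk (hasDerivAt_const x t))).deriv

theorem pdt_eq_fderiv (hf : DifferentiableAt ℝ (uncurry f) (x, t)) :
    pdt f x t = fderiv ℝ (uncurry f) (x, t) (0, 1) :=
  (hf.hasFDerivAt.comp_hasDerivAt (f := fun t' => (x, t')) t
    ((hasDerivAt_const t x).prodMk (hasDerivAt_id t))).deriv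

theorem hasDerivAt_pdx (hf : DifferentiableAt ℝ (uncurry f) (x, t)) :
    HasDerivAt (fun x' => f x' t) (pdx f x t) x :=
  (hf.comp (f := fun x' => (x', t)) x
    (differentiableAt_id.prodMk (differentiableAt_const t))).hasDerivAt

theorem hasDerivAt_comp_curve {a b : ℝ → ℝ} {a' b' s : ℝ}
    (hf : DifferentiableAt ℝ (uncurry f) (a s, b s)) (ha : HasDerivAt a a' s)
    (hb : HasDerivAt b b' s) :
    HasDerivAt (fun r => f (a r) (b r))
      (a' * pdx f (a s) (b s) + b' * pdt f (a s) (b s)) s := by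
  have hchain : HasDerivAt (fun r => f (a r) (b r))
      (fderiv ℝ (uncurry f) (a s, b s) (a', b')) s :=
    hf.hasFDerivAt.comp_hasDerivAt (f := fun r => (a r, b r)) s (ha.prodMk hb)
  have hsplit : ((a', b') : ℝ × ℝ) = a' • (1, 0) + b' • (0, 1) := by simp
  simpa only [hsplit, map_add, map_smul, smul_eq_mul, ← pdx_eq_fderiv hf, ← pdt_eq_fderiv hf]
    using hchain

theorem contDiff_pdx {k n : WithTop ℕ∞} (hf : ContDiff ℝ n (uncurry f)) (hkn : k + 1 ≤ n) :
    ContDiff ℝ k (uncurry (pdx f)) := by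
  have hdiff : Differentiable ℝ (uncurry f) :=
    (hf.of_le (le_add_self.trans hkn)).differentiable one_ne_zero
  have hpdx : uncurry (pdx f) = fun p => fderiv ℝ (uncurry f) p (1, 0) :=
    funext fun p => pdx_eq_fderiv (hdiff p)
  rw [hpdx]
  exact (hf.fderiv_right hkn).clm_apply contDiff_const

theorem pdx_add_const (f : ℝ → ℝ → ℝ) (κ : ℝ) : pdx (fun x t => f x t + κ) = pdx f := by
  funext x t
  exact deriv_add_const κ

/-- The field `f` read in a frame of speed `c`: a stationary profile becomes a wave travelling
to the right with speed `c`. -/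
def movingFrame (c : ℝ) (f : ℝ → ℝ → ℝ) : ℝ → ℝ → ℝ := fun x t => f (x - c * t) t

theorem pdx_movingFrame (c : ℝ) (f : ℝ → ℝ → ℝ) :
    pdx (movingFrame c f) = movingFrame c (pdx f) := by
  funext x t
  exact deriv_comp_sub_const (f := fun y => f y t) (c * t) x

theorem pdt_movingFrame (hf : DifferentiableAt ℝ (uncurry f) (x - c * t, t)) :
    pdt (movingFrame c f) x t = pdt f (x - c * t) t - c * pdx f (x - c * t) t := by
  have hshift : HasDerivAt (fun t' => x - c * t') (-c) t := by
    simpa using ((hasDerivAt_id t).const_mul c).const_sub x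
  have hcurve : pdt (movingFrame c f) x t =
      -c * pdx f (x - c * t) t + 1 * pdt f (x - c * t) t :=
    (hasDerivAt_comp_curve hf hshift (hasDerivAt_id t)).deriv
  rw [hcurve]
  ring

theorem pdt_add_pdx_movingFrame (hq : DifferentiableAt ℝ (uncurry q) (x - c * t, t))
    (hφ : DifferentiableAt ℝ (fun y => φ y t) (x - c * t)) :
    pdt (movingFrame c q) x t + pdx (movingFrame c fun x t => φ x t + c * q x t) x t =
      pdt q (x - c * t) t + pdx φ (x - c * t) t := by
  have hflux : pdx (fun x t => φ x t + c * q x t) (x - c * t) t =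
      pdx φ (x - c * t) t + c * pdx q (x - c * t) t :=
    (hφ.hasDerivAt.add ((hasDerivAt_pdx hq).const_mul c)).deriv
  rw [pdt_movingFrame hq, pdx_movingFrame, movingFrame, hflux]
  ring

theorem stmt0_general (κ : ℝ) {ut u m mt ω : ℝ → ℝ → ℝ}
    (hut : Differentiable ℝ (uncurry ut)) (hutx : Differentiable ℝ (uncurry (pdx ut)))
    (hutxx : Differentiable ℝ (uncurry (pdx (pdx ut))))
    (hu : ∀ x t, u x t = ut (x - κ ^ 2 * t) t + κ)
    (hm : ∀ x t, m x t = u x t - pdx (pdx u) x t)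
    (hmt : ∀ x t, mt x t = ut x t - pdx (pdx ut) x t + κ)
    (hω : ∀ x t, ω x t = ut x t ^ 2 - pdx ut x t ^ 2 + 2 * κ * ut x t) (x t : ℝ) :
    pdt m x t + pdx (fun x' t' => (u x' t' ^ 2 - pdx u x' t' ^ 2) * m x' t') x t =
      pdt mt (x - κ ^ 2 * t) t + pdx (fun x' t' => ω x' t' * mt x' t') (x - κ ^ 2 * t) t := by
  have hux : pdx u = movingFrame (κ ^ 2) (pdx ut) := by
    have hu_frame : u = movingFrame (κ ^ 2) fun x t => ut x t + κ := funext₂ hu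
    rw [hu_frame, pdx_movingFrame, pdx_add_const]
  have hm_frame : m = movingFrame (κ ^ 2) mt := by
    funext x t
    rw [hm, hux, pdx_movingFrame, hu, movingFrame, movingFrame, hmt]
    ring
  have hflux_frame : (fun x t => (u x t ^ 2 - pdx u x t ^ 2) * m x t) =
      movingFrame (κ ^ 2) fun x t => ω x t * mt x t + κ ^ 2 * mt x t := by
    funext x t
    simp only [hu, hux, hm_frame, movingFrame, hω]
    ring
  have hmt_diff : Differentiable ℝ (uncurry mt) := by
    rw [funext₂ hmt]
    exact (hut.sub hutxx).add_const κ
  have hω_diff : Differentiable ℝ (uncurry ω) := by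
    rw [funext₂ hω]
    exact ((hut.pow 2).sub (hutx.pow 2)).add (hut.const_mul (2 * κ))
  rw [hm_frame] at hflux_frame ⊢
  rw [hflux_frame]
  exact pdt_add_pdx_movingFrame (hmt_diff _)
    ((hasDerivAt_pdx (hω_diff _)).mul (hasDerivAt_pdx (hmt_diff _))).differentiableAt

/-- The substitution `u(x,t) = ũ(x−t,t) + 1` transforms the mCH equation
`m_t + ((u² − u_x²) m)_x = 0` (with `m = u − u_xx`) at `(x,t)` into the equation
`m̃_t + (ω̃ m̃)_x = 0` (with `m̃ = ũ − ũ_xx + 1`, `ω̃ = ũ² − ũ_x² + 2ũ`) at `(x−t,t)`. -/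
theorem stmt0 (ut : ℝ → ℝ → ℝ) (hut : ContDiff ℝ 3 (fun p : ℝ × ℝ => ut p.1 p.2))
    (u : ℝ → ℝ → ℝ) (hu : ∀ x t, u x t = ut (x - t) t + 1)
    (m mt ω : ℝ → ℝ → ℝ)
    (hm : ∀ x t, m x t = u x t - pdx (pdx u) x t)
    (hmt : ∀ x t, mt x t = ut x t - pdx (pdx ut) x t + 1)
    (hω : ∀ x t, ω x t = (ut x t) ^ 2 - (pdx ut x t) ^ 2 + 2 * ut x t)
    (x t : ℝ) :
    pdt m x t + pdx (fun x' t' => ((u x' t') ^ 2 - (pdx u x' t') ^ 2) * m x' t') x t = 0 ↔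
      pdt mt (x - t) t + pdx (fun x' t' => ω x' t' * mt x' t') (x - t) t = 0 := by
  have hutx : ContDiff ℝ 2 (uncurry (pdx ut)) := contDiff_pdx hut (by norm_num)
  have hutxx : ContDiff ℝ 1 (uncurry (pdx (pdx ut))) := contDiff_pdx hutx (by norm_num)
  simpa using (stmt0_general 1 (hut.differentiable (by norm_num))
    (hutx.differentiable (by norm_num)) (hutxx.differentiable (by norm_num))
    (by simpa using hu) hm hmt (by simpa using hω) x t).congr_left
end

section
/- Let U ⊆ ℂ be an open neighborhood of i that is invariant under the maps μ ↦ 1/conj(μ) and μ ↦ −conj(μ), and let M : U → M₂(ℂ) be holomorphic with det M(μ) = 1 for all μ ∈ U, satisfying the symmetries M(μ) = conj(M(1/conj(μ))) and M(μ) = σ₃ · conj(M(−conj(μ))) · σ₃ for all μ ∈ U (conj applied entrywise to the matrix). Then there exist a nonzero real number a₁ and real numbers a₂, a₃ such that M(i) = [[a₁, 0], [0, a₁⁻¹]] and M'(i) = [[0, a₂], [a₃, 0]]. -/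
open Matrix Complex

noncomputable section

/-- The Pauli matrix `σ₃`. -/
def sigma3 : Matrix (Fin 2) (Fin 2) ℂ := !![1, 0; 0, -1]

/-!
Both reflections `μ ↦ 1 / conj μ` and `μ ↦ -conj μ` fix `i`. Evaluated at `i`, the symmetries say
that `M(i)` is real and commutes with `σ₃`, hence is real diagonal. Differentiated at `i`, they
acquire the derivatives of `μ ↦ μ⁻¹` and `μ ↦ -μ` as factors, namely `1` and `-1`: so `M'(i)` is
real and anticommutes with `σ₃`, hence is real antidiagonal.
-/

section EntrywiseDerivative

open scoped ComplexConjugate Topology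

variable {k l m n 𝕜 : Type*}

/-- The derivative `M'(a)` of a matrix-valued function. It is taken entry by entry, so that no
norm on matrices has to be chosen; an entry that is not differentiable at `a` gets the junk
value `0`. -/
def entrywiseDeriv [NontriviallyNormedField 𝕜] (M : 𝕜 → Matrix m n 𝕜) (a : 𝕜) : Matrix m n 𝕜 :=
  Matrix.of fun p q => deriv (fun z => M z p q) a

lemma entrywiseDeriv_congr [NontriviallyNormedField 𝕜] {M N : 𝕜 → Matrix m n 𝕜} {a : 𝕜}
    (h : M =ᶠ[𝓝 a] N) : entrywiseDeriv M a = entrywiseDeriv N a := by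
  ext p q
  exact Filter.EventuallyEq.deriv_eq (h.mono fun z hz => congrFun₂ hz p q)

lemma entrywiseDeriv_mul_mul [NontriviallyNormedField 𝕜] [Fintype m] [Fintype n]
    {N : 𝕜 → Matrix m n 𝕜} {a : 𝕜} (hN : ∀ p q, DifferentiableAt 𝕜 (fun z => N z p q) a)
    (A : Matrix k m 𝕜) (B : Matrix n l 𝕜) :
    entrywiseDeriv (fun z => A * N z * B) a = A * entrywiseDeriv N a * B := by
  ext p q
  have hentry : HasDerivAt (fun z => (A * N z * B) p q) ((A * entrywiseDeriv N a * B) p q) a := by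
    simp only [Matrix.mul_apply]
    exact .fun_sum fun j _ =>
      (HasDerivAt.fun_sum fun i _ => (hN i j).hasDerivAt.const_mul _).mul_const _
  exact hentry.deriv

variable [RCLike 𝕜] {a τ' : 𝕜} {τ : 𝕜 → 𝕜}

-- An antiholomorphic reflection fixing `a` is written `z ↦ conj (τ z)` with `τ` holomorphic, so
-- that its effect on the derivative at `a` is the single factor `τ'`.
lemma hasDerivAt_conj_comp_conj_comp {f : 𝕜 → 𝕜} {f' : 𝕜} (hf : HasDerivAt f f' a)
    (hτ : HasDerivAt τ τ' a) (hτa : τ a = conj a) :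
    HasDerivAt (fun z => conj (f (conj (τ z)))) (τ' * conj f') a :=
  ((hτa ▸ hf.conj_conj).comp a hτ).congr_deriv (mul_comm _ _)

lemma entrywiseDeriv_map_conj_comp_conj_comp {M : 𝕜 → Matrix m n 𝕜}
    (hM : ∀ p q, DifferentiableAt 𝕜 (fun z => M z p q) a)
    (hτ : HasDerivAt τ τ' a) (hτa : τ a = conj a) :
    entrywiseDeriv (fun z => (M (conj (τ z))).map conj) a =
      τ' • (entrywiseDeriv M a).map conj := by
  ext p q
  exact (hasDerivAt_conj_comp_conj_comp (hM p q).hasDerivAt hτ hτa).deriv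

end EntrywiseDerivative

section SymmetryAtI

open scoped ComplexConjugate Topology

variable {m n : Type*} {M : ℂ → Matrix m n ℂ}

lemma entrywiseDeriv_I_eq_map_conj (hM : ∀ p q, DifferentiableAt ℂ (fun μ => M μ p q) I)
    (hsym : ∀ᶠ μ in 𝓝 I, M μ = (M (1 / conj μ)).map conj) :
    entrywiseDeriv M I = (entrywiseDeriv M I).map conj := by
  have hinv : HasDerivAt (fun μ : ℂ => μ⁻¹) 1 I := by
    simpa using hasDerivAt_inv I_ne_zero
  calc
    entrywiseDeriv M I = entrywiseDeriv (fun μ => (M (conj μ⁻¹)).map conj) I :=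
      entrywiseDeriv_congr (by simpa [Filter.EventuallyEq] using hsym)
    _ = (1 : ℂ) • (entrywiseDeriv M I).map conj :=
      entrywiseDeriv_map_conj_comp_conj_comp hM hinv (by simp)
    _ = (entrywiseDeriv M I).map conj := one_smul _ _

lemma entrywiseDeriv_I_eq_neg_mul_map_conj_mul [Fintype m] [Fintype n]
    (hM : ∀ p q, DifferentiableAt ℂ (fun μ => M μ p q) I)
    {A : Matrix m m ℂ} {B : Matrix n n ℂ}
    (hsym : ∀ᶠ μ in 𝓝 I, M μ = A * (M (-conj μ)).map conj * B) :
    entrywiseDeriv M I = -(A * (entrywiseDeriv M I).map conj * B) := by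
  have hfix : -I = conj I := conj_I.symm
  have hreflected : ∀ p q, DifferentiableAt ℂ (fun μ => (M (conj (-μ))).map conj p q) I :=
    fun p q => (hasDerivAt_conj_comp_conj_comp (hM p q).hasDerivAt
      (hasDerivAt_neg I) hfix).differentiableAt
  calc
    entrywiseDeriv M I = entrywiseDeriv (fun μ => A * (M (conj (-μ))).map conj * B) I :=
      entrywiseDeriv_congr (by simpa [Filter.EventuallyEq] using hsym)
    _ = A * entrywiseDeriv (fun μ => (M (conj (-μ))).map conj) I * B :=
      entrywiseDeriv_mul_mul hreflected A B
    _ = A * ((-1 : ℂ) • (entrywiseDeriv M I).map conj) * B := by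
      rw [entrywiseDeriv_map_conj_comp_conj_comp hM (hasDerivAt_neg I) hfix]
    _ = -(A * (entrywiseDeriv M I).map conj * B) := by
      rw [neg_one_smul, Matrix.mul_neg, Matrix.neg_mul]

end SymmetryAtI

section MatrixSymmetry

open scoped ComplexConjugate

lemma sigma3_mul_mul_sigma3 (A : Matrix (Fin 2) (Fin 2) ℂ) :
    sigma3 * A * sigma3 = !![A 0 0, -A 0 1; -A 1 0, A 1 1] := by
  rw [A.eta_fin_two]
  simp [sigma3]

lemma eq_diagonal_of_eq_sigma3_mul_mul_sigma3 {A : Matrix (Fin 2) (Fin 2) ℂ}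
    (hA : A = sigma3 * A * sigma3) : A = !![A 0 0, 0; 0, A 1 1] := by
  rw [sigma3_mul_mul_sigma3] at hA
  have h01 : A 0 1 = 0 := self_eq_neg.1 (congrFun₂ hA 0 1)
  have h10 : A 1 0 = 0 := self_eq_neg.1 (congrFun₂ hA 1 0)
  simpa only [h01, h10] using A.eta_fin_two

lemma eq_antidiagonal_of_eq_neg_sigma3_mul_mul_sigma3 {A : Matrix (Fin 2) (Fin 2) ℂ}
    (hA : A = -(sigma3 * A * sigma3)) : A = !![0, A 0 1; A 1 0, 0] := by
  rw [sigma3_mul_mul_sigma3] at hA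
  have h00 : A 0 0 = 0 := self_eq_neg.1 (congrFun₂ hA 0 0)
  have h11 : A 1 1 = 0 := self_eq_neg.1 (congrFun₂ hA 1 1)
  simpa only [h00, h11] using A.eta_fin_two

lemma exists_real_diagonal_of_symm {A : Matrix (Fin 2) (Fin 2) ℂ} (hdet : A.det = 1)
    (hreal : A = A.map conj) (hsigma : A = sigma3 * A.map conj * sigma3) :
    ∃ r : ℝ, r ≠ 0 ∧ A = !![(r : ℂ), 0; 0, (r : ℂ)⁻¹] := by
  rw [← hreal] at hsigma
  have hdiag := eq_diagonal_of_eq_sigma3_mul_mul_sigma3 hsigma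
  obtain ⟨r, h00⟩ := conj_eq_iff_real.1 (congrFun₂ hreal 0 0).symm
  have hmul : (r : ℂ) * A 1 1 = 1 := by
    rwa [hdiag, det_fin_two_of, mul_zero, sub_zero, h00] at hdet
  refine ⟨r, ofReal_ne_zero.1 (left_ne_zero_of_mul_eq_one hmul), ?_⟩
  rwa [h00, eq_inv_of_mul_eq_one_right hmul] at hdiag

lemma exists_real_antidiagonal_of_symm {A : Matrix (Fin 2) (Fin 2) ℂ}
    (hreal : A = A.map conj) (hsigma : A = -(sigma3 * A.map conj * sigma3)) :
    ∃ r s : ℝ, A = !![0, (r : ℂ); (s : ℂ), 0] := by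
  rw [← hreal] at hsigma
  obtain ⟨r, h01⟩ := conj_eq_iff_real.1 (congrFun₂ hreal 0 1).symm
  obtain ⟨s, h10⟩ := conj_eq_iff_real.1 (congrFun₂ hreal 1 0).symm
  refine ⟨r, s, ?_⟩
  rw [← h01, ← h10]
  exact eq_antidiagonal_of_eq_neg_sigma3_mul_mul_sigma3 hsigma

end MatrixSymmetry

open scoped ComplexConjugate Topology in
theorem stmt12_general {M : ℂ → Matrix (Fin 2) (Fin 2) ℂ}
    (hM : ∀ p q, DifferentiableAt ℂ (fun μ => M μ p q) I) (hdet : (M I).det = 1)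
    (hsym1 : ∀ᶠ μ in 𝓝 I, M μ = (M (1 / conj μ)).map conj)
    (hsym2 : ∀ᶠ μ in 𝓝 I, M μ = sigma3 * (M (-conj μ)).map conj * sigma3) :
    ∃ a₁ a₂ a₃ : ℝ, a₁ ≠ 0 ∧
      M I = !![(a₁ : ℂ), 0; 0, (a₁ : ℂ)⁻¹] ∧ entrywiseDeriv M I = !![0, (a₂ : ℂ); (a₃ : ℂ), 0] := by
  have hreal : M I = (M I).map conj := by simpa using hsym1.self_of_nhds
  have hsigma : M I = sigma3 * (M I).map conj * sigma3 := by simpa using hsym2.self_of_nhds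
  obtain ⟨a₁, ha₁, hvalue⟩ := exists_real_diagonal_of_symm hdet hreal hsigma
  obtain ⟨a₂, a₃, hderiv⟩ := exists_real_antidiagonal_of_symm
    (entrywiseDeriv_I_eq_map_conj hM hsym1) (entrywiseDeriv_I_eq_neg_mul_map_conj_mul hM hsym2)
  exact ⟨a₁, a₂, a₃, ha₁, hvalue, hderiv⟩

/-- A unimodular matrix function holomorphic near `i`, satisfying the symmetries
`M(μ) = conj(M(1/μ̄))` and `M(μ) = σ₃ conj(M(−μ̄)) σ₃`, has at `μ = i` the structure
`M(i) = diag(a₁, a₁⁻¹)` with `a₁ ∈ ℝ∖{0}` and `M'(i) = [[0,a₂],[a₃,0]]` with `a₂,a₃ ∈ ℝ`. -/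
theorem stmt12 (U : Set ℂ) (hU : IsOpen U) (hiU : Complex.I ∈ U)
    (hUinv : ∀ μ ∈ U, 1 / (starRingEnd ℂ) μ ∈ U)
    (hUneg : ∀ μ ∈ U, -(starRingEnd ℂ) μ ∈ U)
    (M : ℂ → Matrix (Fin 2) (Fin 2) ℂ)
    (hhol : ∀ p q : Fin 2, DifferentiableOn ℂ (fun μ => M μ p q) U)
    (hdet : ∀ μ ∈ U, (M μ).det = 1)
    (hsym1 : ∀ μ ∈ U, M μ = (M (1 / (starRingEnd ℂ) μ)).map (starRingEnd ℂ))
    (hsym2 : ∀ μ ∈ U, M μ = sigma3 * (M (-(starRingEnd ℂ) μ)).map (starRingEnd ℂ) * sigma3) :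
    ∃ a₁ a₂ a₃ : ℝ, a₁ ≠ 0 ∧
      M Complex.I = !![(a₁ : ℂ), 0; 0, (a₁ : ℂ)⁻¹] ∧
      (Matrix.of fun p q : Fin 2 => deriv (fun μ => M μ p q) Complex.I) =
        !![0, (a₂ : ℂ); (a₃ : ℂ), 0] := by
  have hnhds : U ∈ nhds I := hU.mem_nhds hiU
  exact stmt12_general (fun p q => (hhol p q).differentiableAt hnhds) (hdet I hiU)
    (Filter.mem_of_superset hnhds hsym1) (Filter.mem_of_superset hnhds hsym2)

end
end
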